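/- Let m ≥ 1 and let A_1, A_2, A_3, A_4 be four distinct points of ℝ² no three of which are collinear. Then the Hermite problem with scheme {m+1, m, m, m; 2m} is 2m-correct; equivalently, the only p ∈ Π_{2m} with D^{ij}p(A_1) = 0 for all i+j ≤ m and D^{ij}p(A_k) = 0 for all i+j ≤ m−1 (k = 2,3,4) is p = 0. -/

import Mathlib

open MvPolynomial

/-- `Dij i j p` is the partial derivative `D^{ij} p = ∂^{i+j} p / ∂x^i ∂y^j`. -/
noncomputable def Dij (i j : ℕ) (p : MvPolynomial (Fin 2) ℝ) : MvPolynomial (Fin 2) ℝ :=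
  (fun q => pderiv (0 : Fin 2) q)^[i] ((fun q => pderiv (1 : Fin 2) q)^[j] p)

/-- The Hermite interpolation problem with multiplicities `nk` on the nodes `A` is
`n`-correct: every data admits a unique interpolant in `Π_n`. -/
def HermiteCorrect (n s : ℕ) (nk : Fin s → ℕ) (A : Fin s → Fin 2 → ℝ) : Prop :=
  ∀ c : Fin s → ℕ → ℕ → ℝ,
    ∃! p : MvPolynomial (Fin 2) ℝ, p.totalDegree ≤ n ∧
      ∀ (k : Fin s) (i j : ℕ), i + j + 1 ≤ nk k → eval (A k) (Dij i j p) = c k i j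

/-!
The order of vanishing of a polynomial at a point is additive under multiplication, and a polynomial
whose orders of vanishing at points of a line add up to more than its degree is divisible by the
equation of that line. Hence, if each node lies on exactly one of `r` lines, each line carries at
most `r` nodes, and the orders of `p` at the nodes add up to more than `r * deg p`, then `p = 0`: by
pigeonhole some line divides `p`, and passing to the quotient lowers the sum by at most `r` and the
bound by exactly `r`. For four points in general position, the lines `A₀A₁` and `A₂A₃` give the
bound `2 * deg p`, and the orders `m + 1, m, m, m` add up to `4 * m + 1 > 2 * (2 * m)`. Existence of
the interpolant follows by counting dimensions.
-/

section Taylor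

variable {σ R : Type*} [CommSemiring R]

/-- The Taylor expansion of `p` at `a`: the polynomial `p (X + a)`, the multivariate analogue of
`Polynomial.taylor`. -/
noncomputable def mvTaylor (a : σ → R) : MvPolynomial σ R →ₐ[R] MvPolynomial σ R :=
  aeval fun i => X i + C (a i)

@[simp]
theorem mvTaylor_X (a : σ → R) (i : σ) : mvTaylor a (X i) = X i + C (a i) := by
  simp [mvTaylor]

theorem mvTaylor_injective {R : Type*} [CommRing R] (a : σ → R) :
    Function.Injective (mvTaylor a) := by
  have h : (mvTaylor (-a)).comp (mvTaylor a) = AlgHom.id R _ :=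
    MvPolynomial.algHom_ext fun i => by simp [mvTaylor, algebraMap_eq]
  exact Function.LeftInverse.injective (g := mvTaylor (-a)) (DFunLike.congr_fun h)

theorem constantCoeff_mvTaylor (a : σ → R) (p : MvPolynomial σ R) :
    constantCoeff (mvTaylor a p) = eval a p := by
  induction p using MvPolynomial.induction_on with
  | C r => simp [mvTaylor, algebraMap_eq]
  | add p q hp hq => simp [hp, hq]
  | mul_X p i hp => simp [hp]

theorem pderiv_mvTaylor (a : σ → R) (i : σ) (p : MvPolynomial σ R) :
    pderiv i (mvTaylor a p) = mvTaylor a (pderiv i p) := by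
  classical
  induction p using MvPolynomial.induction_on with
  | C r => simp [mvTaylor, algebraMap_eq]
  | add p q hp hq => simp [hp, hq]
  | mul_X p j hp => simp [hp, pderiv_X, Pi.single_apply, apply_ite (mvTaylor a)]

theorem coeff_iterate_pderiv (i : σ) (k : ℕ) (p : MvPolynomial σ R) (d : σ →₀ ℕ) :
    coeff d ((pderiv i)^[k] p) = (d i + 1).ascFactorial k * coeff (d + Finsupp.single i k) p := by
  induction k generalizing p with
  | zero => simp
  | succ k ih =>
    rw [Function.iterate_succ_apply, ih, coeff_pderiv, add_assoc, ← Finsupp.single_add,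
      Nat.ascFactorial_succ]
    simp only [Finsupp.add_apply, Finsupp.single_eq_same]
    push_cast
    ring

/-- The order of vanishing of `p` at the point `a`, that is, the least degree of a monomial in the
Taylor expansion of `p` at `a`; it is `⊤` for `p = 0`. -/
noncomputable def vanishingOrder (a : σ → R) (p : MvPolynomial σ R) : ℕ∞ :=
  (mvTaylor a p : MvPowerSeries σ R).order

theorem natCast_le_vanishingOrder_iff {a : σ → R} {p : MvPolynomial σ R} {n : ℕ} :
    n ≤ vanishingOrder a p ↔ ∀ d : σ →₀ ℕ, d.degree < n → coeff d (mvTaylor a p) = 0 := by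
  simp only [← coeff_coe]
  refine ⟨fun h d hd => MvPowerSeries.coeff_of_lt_order (lt_of_lt_of_le ?_ h),
    MvPowerSeries.nat_le_order⟩
  exact_mod_cast hd

theorem vanishingOrder_ne_top {R : Type*} [CommRing R] (a : σ → R) {p : MvPolynomial σ R}
    (hp : p ≠ 0) : vanishingOrder a p ≠ ⊤ := by
  rw [vanishingOrder, Ne, MvPowerSeries.order_eq_top_iff, coe_eq_zero_iff]
  exact (map_ne_zero_iff _ (mvTaylor_injective a)).2 hp

theorem vanishingOrder_eq_zero_of_eval_ne_zero {a : σ → R} {p : MvPolynomial σ R}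
    (h : eval a p ≠ 0) : vanishingOrder a p = 0 := by
  rw [← constantCoeff_mvTaylor, constantCoeff_eq, ← coeff_coe] at h
  simpa [vanishingOrder] using MvPowerSeries.order_le h

theorem vanishingOrder_mul [NoZeroDivisors R] (a : σ → R) (p q : MvPolynomial σ R) :
    vanishingOrder a (p * q) = vanishingOrder a p + vanishingOrder a q := by
  simp [vanishingOrder, MvPowerSeries.order_mul]

end Taylor

section Affine

variable {σ R : Type*} [CommRing R]

theorem exists_eq_add_sum_of_totalDegree_le_one [Fintype σ] {l : MvPolynomial σ R}
    (hl : l.totalDegree ≤ 1) (a : σ → R) :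
    ∃ c : σ → R, l = C (eval a l) + ∑ i, C (c i) * (X i - C (a i)) := by
  have hspan := homogeneousComponent_mem 1 l
  rw [homogeneousSubmodule_one_eq_span_X, Submodule.mem_span_range_iff_exists_fun] at hspan
  obtain ⟨c, hc⟩ := hspan
  have hdecomp : l = C (coeff 0 l) + ∑ i, C (c i) * X i := by
    calc l = ∑ n ∈ Finset.range (l.totalDegree + 1), homogeneousComponent n l :=
          (sum_homogeneousComponent l).symm
      _ = ∑ n ∈ Finset.range 2, homogeneousComponent n l :=
          Finset.sum_subset (Finset.range_subset_range.2 (by omega)) fun n _ hn =>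
            homogeneousComponent_eq_zero n l (by simpa using hn)
      _ = C (coeff 0 l) + ∑ i, C (c i) * X i := by
          simp only [Finset.sum_range_succ, Finset.sum_range_zero, zero_add,
            homogeneousComponent_zero, ← hc, C_mul']
  refine ⟨c, ?_⟩
  have heval := congrArg (eval a) hdecomp
  simp only [map_add, map_sum, map_mul, eval_C, eval_X] at heval
  rw [heval]
  nth_rw 1 [hdecomp]
  simp [mul_sub, Finset.sum_sub_distrib]

theorem exists_eq_sum_of_totalDegree_eq_one [Fintype σ] {l : MvPolynomial σ R}
    (hl : l.totalDegree = 1) {a : σ → R} (ha : eval a l = 0) :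
    ∃ c : σ → R, (∃ i, c i ≠ 0) ∧ l = ∑ i, C (c i) * (X i - C (a i)) := by
  obtain ⟨c, hc⟩ := exists_eq_add_sum_of_totalDegree_le_one hl.le a
  rw [ha, C_0, zero_add] at hc
  refine ⟨c, ?_, hc⟩
  by_contra! hzero
  simp [hc, hzero] at hl

theorem vanishingOrder_eq_one_of_totalDegree_eq_one [Finite σ] {l : MvPolynomial σ R}
    (hl : l.totalDegree = 1) {a : σ → R} (ha : eval a l = 0) : vanishingOrder a l = 1 := by
  classical
  cases nonempty_fintype σ
  obtain ⟨c, ⟨i, hi⟩, hc⟩ := exists_eq_sum_of_totalDegree_eq_one hl ha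
  refine le_antisymm ?_ ?_
  · have hcoeff : coeff (Finsupp.single i 1) (mvTaylor a l) = c i := by
      simp [hc, ← algebraMap_eq, coeff_sum, coeff_C_mul, coeff_X, Finsupp.single_left_inj]
    rw [← hcoeff, ← coeff_coe] at hi
    simpa [vanishingOrder] using MvPowerSeries.order_le hi
  · refine natCast_le_vanishingOrder_iff (n := 1).2 fun d hd => ?_
    rw [Nat.lt_one_iff, Finsupp.degree_eq_zero_iff] at hd
    rw [hd, ← constantCoeff_eq, constantCoeff_mvTaylor, ha]

theorem dvd_sub_aeval_of_forall_dvd_X_sub {l : MvPolynomial σ R} {g : σ → MvPolynomial σ R}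
    (h : ∀ i, l ∣ X i - g i) (p : MvPolynomial σ R) : l ∣ p - aeval g p := by
  induction p using MvPolynomial.induction_on with
  | C r => simp [algebraMap_eq]
  | add p q hp hq =>
    rw [map_add, add_sub_add_comm]
    exact dvd_add hp hq
  | mul_X p i hp =>
    rw [map_mul, aeval_X]
    exact dvd_mul_sub_mul hp (h i)

end Affine

theorem pow_dvd_aeval {σ R S : Type*} [CommSemiring R] [CommSemiring S] [Algebra R S] {y : S}
    {g : σ → S} (hg : ∀ i, y ∣ g i) {n : ℕ} {p : MvPolynomial σ R}
    (hp : ∀ d ∈ p.support, n ≤ d.degree) : y ^ n ∣ aeval g p := by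
  rw [aeval_def, eval₂_eq]
  refine Finset.dvd_sum fun d hd => Dvd.dvd.mul_left ?_ _
  calc y ^ n ∣ y ^ d.degree := pow_dvd_pow y (hp d hd)
    _ = ∏ i ∈ d.support, y ^ d i := (Finset.prod_pow_eq_pow_sum _ _ _).symm
    _ ∣ ∏ i ∈ d.support, g i ^ d i := Finset.prod_dvd_prod_of_dvd _ _ fun i _ =>
        pow_dvd_pow_of_dvd (hg i) _

section LineRestriction

variable {σ R : Type*}

/-- The restriction of `p` to the line `t ↦ b + t w`, as a polynomial in the parameter `t`. -/
noncomputable def lineRestriction [CommSemiring R] (b w : σ → R) :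
    MvPolynomial σ R →ₐ[R] Polynomial R :=
  aeval fun i => Polynomial.C (b i) + Polynomial.C (w i) * Polynomial.X

theorem natDegree_lineRestriction_le [CommSemiring R] (b w : σ → R) (p : MvPolynomial σ R) :
    (lineRestriction b w p).natDegree ≤ p.totalDegree := by
  have hle (i : σ) : (Polynomial.C (b i) + Polynomial.C (w i) * Polynomial.X).natDegree ≤ 1 := by
    compute_degree
  exact (aeval_natDegree_le p le_rfl _ hle).trans_eq (mul_one _)

variable [CommRing R]

theorem lineRestriction_eq_aeval_mvTaylor (b w : σ → R) (t : R) (p : MvPolynomial σ R) :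
    lineRestriction b w p = aeval (fun i => Polynomial.C (w i) * (Polynomial.X - Polynomial.C t))
      (mvTaylor (fun i => b i + w i * t) p) := by
  have h : lineRestriction b w =
      (aeval fun i => Polynomial.C (w i) * (Polynomial.X - Polynomial.C t)).comp
        (mvTaylor fun i => b i + w i * t) := by
    refine MvPolynomial.algHom_ext fun i => ?_
    simp only [lineRestriction, AlgHom.comp_apply, mvTaylor_X, map_add, aeval_X, algHom_C,
      Polynomial.algebraMap_eq, map_mul]
    ring
  exact DFunLike.congr_fun h p

theorem X_sub_C_pow_dvd_lineRestriction {b w : σ → R} {t : R} {n : ℕ}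
    {p : MvPolynomial σ R} (hn : n ≤ vanishingOrder (fun i => b i + w i * t) p) :
    (Polynomial.X - Polynomial.C t) ^ n ∣ lineRestriction b w p := by
  rw [lineRestriction_eq_aeval_mvTaylor b w t]
  refine pow_dvd_aeval (fun i => dvd_mul_left _ _) fun d hd => ?_
  by_contra! hlt
  exact mem_support_iff.1 hd (natCast_le_vanishingOrder_iff.1 hn d hlt)

end LineRestriction

section Lines

variable {σ K : Type*} [Field K]

theorem lineRestriction_eq_zero_of_totalDegree_lt_sum {b w : σ → K} {p : MvPolynomial σ K}
    (T : Finset K)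
    (h : p.totalDegree < ∑ t ∈ T, vanishingOrder (fun i => b i + w i * t) p) :
    lineRestriction b w p = 0 := by
  obtain rfl | hp := eq_or_ne p 0
  · exact map_zero _
  obtain ⟨n, hn⟩ : ∃ n : K → ℕ, ∀ t, vanishingOrder (fun i => b i + w i * t) p = n t :=
    ⟨fun _ => ENat.toNat _, fun _ => (ENat.natCast_toNat (vanishingOrder_ne_top _ hp)).symm⟩
  have hdeg : p.totalDegree < ∑ t ∈ T, n t := by
    simp only [hn] at h
    exact_mod_cast h
  have hdvd : ∏ t ∈ T, (Polynomial.X - Polynomial.C t) ^ n t ∣ lineRestriction b w p :=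
    Finset.prod_dvd_of_coprime
      (fun s _ t _ hst => (Polynomial.pairwise_coprime_X_sub_C Function.injective_id hst).pow)
      fun t _ => X_sub_C_pow_dvd_lineRestriction (hn t).ge
  refine Polynomial.eq_zero_of_dvd_of_natDegree_lt hdvd ?_
  rw [Polynomial.natDegree_prod_of_monic _ _ fun t _ => (Polynomial.monic_X_sub_C t).pow _]
  simpa using (natDegree_lineRestriction_le b w p).trans_lt hdeg

theorem exists_line_parametrization {l : MvPolynomial (Fin 2) K} (hl : l.totalDegree = 1)
    {b : Fin 2 → K} (hb : eval b l = 0) :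
    ∃ (w : Fin 2 → K) (τ : MvPolynomial (Fin 2) K), ∀ i, l ∣ X i - (C (b i) + C (w i) * τ) := by
  obtain ⟨c, ⟨i, hi⟩, hc⟩ := exists_eq_sum_of_totalDegree_eq_one hl hb
  obtain ⟨u, v, huv⟩ : ∃ u v : K, u * c 0 + v * c 1 = 1 := by
    fin_cases i
    · exact ⟨(c 0)⁻¹, 0, by simpa using inv_mul_cancel₀ hi⟩
    · exact ⟨0, (c 1)⁻¹, by simpa using inv_mul_cancel₀ hi⟩
  have huvC : C u * C (c 0) + C v * C (c 1) = (1 : MvPolynomial (Fin 2) K) := by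
    rw [← C_mul, ← C_mul, ← C_add, huv, C_1]
  rw [Fin.sum_univ_two] at hc
  refine ⟨![-c 1, c 0], C u * (X 1 - C (b 1)) - C v * (X 0 - C (b 0)),
    Fin.forall_fin_two.2 ⟨⟨C u, ?_⟩, ⟨C v, ?_⟩⟩⟩
  · simp only [hc, Matrix.cons_val_zero, C_neg]
    linear_combination (-(X 0 - C (b 0))) * huvC
  · simp only [hc, Matrix.cons_val_one, Matrix.cons_val_fin_one]
    linear_combination (-(X 1 - C (b 1))) * huvC

theorem dvd_of_totalDegree_lt_sum_vanishingOrder {κ : Type*} {l p : MvPolynomial (Fin 2) K}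
    (hl : l.totalDegree = 1) {A : κ → Fin 2 → K} {s : Finset κ} (hA : Set.InjOn A s)
    (hs : ∀ k ∈ s, eval (A k) l = 0) (h : p.totalDegree < ∑ k ∈ s, vanishingOrder (A k) p) :
    l ∣ p := by
  classical
  obtain ⟨k₀, hk₀⟩ : s.Nonempty := by
    rw [Finset.nonempty_iff_ne_empty]
    rintro rfl
    simp at h
  obtain ⟨w, τ, hτ⟩ := exists_line_parametrization hl (hs k₀ hk₀)
  have hpoint : ∀ k ∈ s, A k = fun i => A k₀ i + w i * eval (A k) τ := fun k hk => by
    ext i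
    have := map_dvd (eval (A k)) (hτ i)
    simpa [hs k hk, sub_eq_zero] using this
  have hinj : Set.InjOn (fun k => eval (A k) τ) s := fun j hj k hk heq => by
    have heq : eval (A j) τ = eval (A k) τ := heq
    exact hA hj hk (by rw [hpoint j hj, hpoint k hk, heq])
  have hres : lineRestriction (A k₀) w p = 0 := by
    refine lineRestriction_eq_zero_of_totalDegree_lt_sum (s.image fun k => eval (A k) τ) ?_
    rw [Finset.sum_image hinj]
    convert h using 1
    exact Finset.sum_congr rfl fun k hk => by rw [← hpoint k hk]
  have hcomp : (Polynomial.aeval τ) (lineRestriction (A k₀) w p) =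
      aeval (fun i => C (A k₀ i) + C (w i) * τ) p := by
    simp only [lineRestriction, ← AlgHom.comp_apply, comp_aeval]
    simp [algebraMap_eq]
  have hdvd := dvd_sub_aeval_of_forall_dvd_X_sub hτ p
  rwa [← hcomp, hres, map_zero, sub_zero] at hdvd

theorem eq_zero_of_card_mul_totalDegree_lt_sum_vanishingOrder {ι κ : Type*} [Fintype ι]
    [DecidableEq ι] [Fintype κ] {A : κ → Fin 2 → K} (hA : Function.Injective A)
    {L : ι → MvPolynomial (Fin 2) K} (hL : ∀ j, (L j).totalDegree = 1)
    {ℓ : κ → ι} (hℓ : ∀ k j, eval (A k) (L j) = 0 ↔ ℓ k = j)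
    (hcard : ∀ j, Finset.card {k | ℓ k = j} ≤ Fintype.card ι) {p : MvPolynomial (Fin 2) K}
    (h : (Fintype.card ι * p.totalDegree : ℕ) < ∑ k, vanishingOrder (A k) p) : p = 0 := by
  induction hd : p.totalDegree using Nat.strong_induction_on generalizing p with
  | _ d ih =>
  subst hd
  by_contra hp
  obtain ⟨j, hj⟩ : ∃ j, p.totalDegree < ∑ k with ℓ k = j, vanishingOrder (A k) p := by
    rw [← Finset.sum_fiberwise Finset.univ ℓ] at h
    have hconst : ∑ _j : ι, (p.totalDegree : ℕ∞) = (Fintype.card ι * p.totalDegree : ℕ) := by simp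
    simpa using Finset.exists_lt_of_sum_lt (hconst.trans_lt h)
  obtain ⟨q, rfl⟩ : L j ∣ p :=
    dvd_of_totalDegree_lt_sum_vanishingOrder (hL j) hA.injOn
      (fun k hk => (hℓ k j).2 (by simpa using hk)) hj
  have hLj : L j ≠ 0 := left_ne_zero_of_mul hp
  have hq : q ≠ 0 := right_ne_zero_of_mul hp
  have hdeg : (L j * q).totalDegree = 1 + q.totalDegree := by
    rw [totalDegree_mul_of_isDomain hLj hq, hL]
  have horder : ∀ k, vanishingOrder (A k) (L j) = if ℓ k = j then 1 else 0 := fun k => by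
    split_ifs with hk
    · exact vanishingOrder_eq_one_of_totalDegree_eq_one (hL j) ((hℓ k j).2 hk)
    · exact vanishingOrder_eq_zero_of_eval_ne_zero (mt (hℓ k j).1 hk)
  have hsum : ∑ k, vanishingOrder (A k) (L j * q) =
      Finset.card {k | ℓ k = j} + ∑ k, vanishingOrder (A k) q := by
    simp [vanishingOrder_mul, Finset.sum_add_distrib, horder]
  refine hq (ih q.totalDegree (by omega) ?_ rfl)
  refine lt_of_add_lt_add_left (a := (Fintype.card ι : ℕ∞)) ?_
  calc (Fintype.card ι + (Fintype.card ι * q.totalDegree : ℕ) : ℕ∞) =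
        (Fintype.card ι * (L j * q).totalDegree : ℕ) := by
        rw [hdeg, mul_add, mul_one, Nat.cast_add]
    _ < Finset.card {k | ℓ k = j} + ∑ k, vanishingOrder (A k) q := hsum ▸ h
    _ ≤ Fintype.card ι + ∑ k, vanishingOrder (A k) q := by
        gcongr
        exact hcard j

theorem exists_totalDegree_eq_one_of_ne {a b : Fin 2 → K} (hab : a ≠ b) :
    ∃ l : MvPolynomial (Fin 2) K, l.totalDegree = 1 ∧ eval a l = 0 ∧ eval b l = 0 := by
  have htotal (r : K) (i : Fin 2) (s : K) : (C r * (X i - C s)).totalDegree ≤ 1 :=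
    (totalDegree_mul _ _).trans <| by
      simpa using (totalDegree_sub_C_le (X i) s).trans_eq (totalDegree_X i)
  let l : MvPolynomial (Fin 2) K :=
    C (b 1 - a 1) * (X 0 - C (a 0)) - C (b 0 - a 0) * (X 1 - C (a 1))
  have ha : eval a l = 0 := by simp [l]
  refine ⟨l, le_antisymm ?_ ?_, ha, ?_⟩
  · exact (totalDegree_sub _ _).trans (max_le (htotal _ _ _) (htotal _ _ _))
  · rw [Nat.one_le_iff_ne_zero, Ne, totalDegree_eq_zero_iff_eq_C]
    intro hconst
    have hzero (x : Fin 2 → K) : eval x l = 0 := by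
      rw [hconst, eval_C] at ha ⊢
      exact ha
    have h1 : b 1 = a 1 := by simpa [l, sub_eq_zero] using hzero ![a 0 + 1, a 1]
    have h0 : a 0 = b 0 := by simpa [l, sub_eq_zero] using hzero ![a 0, a 1 + 1]
    exact hab (_root_.funext (Fin.forall_fin_two.2 ⟨h0, h1.symm⟩))
  · simp only [l, map_sub, map_mul, eval_C, eval_X]
    ring

theorem eq_zero_of_two_mul_totalDegree_lt_sum_vanishingOrder {A : Fin 4 → Fin 2 → K}
    (hA : Function.Injective A)
    (hcol : ∀ i j k : Fin 4, i ≠ j → i ≠ k → j ≠ k →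
      ∀ l : MvPolynomial (Fin 2) K, l.totalDegree = 1 →
        ¬(eval (A i) l = 0 ∧ eval (A j) l = 0 ∧ eval (A k) l = 0))
    {p : MvPolynomial (Fin 2) K}
    (h : (2 * p.totalDegree : ℕ) < ∑ k, vanishingOrder (A k) p) : p = 0 := by
  have hline (i j : Fin 4) (hij : i ≠ j) := exists_totalDegree_eq_one_of_ne (hA.ne hij)
  obtain ⟨l₀₁, hl₀₁, h₀, h₁⟩ := hline 0 1 (by decide)
  obtain ⟨l₂₃, hl₂₃, h₂, h₃⟩ := hline 2 3 (by decide)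
  have h₀₁ (k : Fin 4) (hk₀ : 0 ≠ k) (hk₁ : 1 ≠ k) : eval (A k) l₀₁ ≠ 0 := fun hk =>
    hcol 0 1 k (by decide) hk₀ hk₁ l₀₁ hl₀₁ ⟨h₀, h₁, hk⟩
  have h₂₃ (k : Fin 4) (hk₂ : 2 ≠ k) (hk₃ : 3 ≠ k) : eval (A k) l₂₃ ≠ 0 := fun hk =>
    hcol 2 3 k (by decide) hk₂ hk₃ l₂₃ hl₂₃ ⟨h₂, h₃, hk⟩
  refine eq_zero_of_card_mul_totalDegree_lt_sum_vanishingOrder hA (L := ![l₀₁, l₂₃])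
    (ℓ := ![0, 0, 1, 1]) (Fin.forall_fin_two.2 ⟨hl₀₁, hl₂₃⟩) ?_ (by decide) h
  intro k j
  fin_cases k <;> fin_cases j <;> simp [*]

end Lines

section Counting

theorem card_degree_lt (σ : Type*) [Fintype σ] (n : ℕ) :
    Nat.card {d : σ →₀ ℕ // d.degree < n} =
      ∑ i ∈ Finset.range n, (Fintype.card σ).multichoose i := by
  classical
  have hdisj : (Finset.range n : Set ℕ).PairwiseDisjoint
      (Finset.finsuppAntidiag (Finset.univ : Finset σ)) := fun i _ j _ hij =>
    Finset.disjoint_left.2 fun d hi hj => hij <| by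
      rw [Finset.mem_finsuppAntidiag] at hi hj
      exact hi.1.symm.trans hj.1
  rw [← Finset.card_univ, ← Finset.sum_congr rfl fun i _ =>
    Finset.card_finsuppAntidiag_nat_eq_multichoose (s := (Finset.univ : Finset σ)) i,
    ← Finset.card_biUnion hdisj]
  refine Nat.subtype_card _ fun d => ?_
  simp [Finset.mem_finsuppAntidiag, Finsupp.degree_eq_sum]

theorem card_fin_two_degree_lt (n : ℕ) :
    Nat.card {d : Fin 2 →₀ ℕ // d.degree < n} = (n + 1).choose 2 := by
  cases n with
  | zero => simp
  | succ n => rw [card_degree_lt, Fintype.card_fin, Nat.sum_range_multichoose]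

theorem finrank_restrictTotalDegree (σ K : Type*) [CommRing K] [Nontrivial K] (n : ℕ) :
    Module.finrank K (restrictTotalDegree σ K n) =
      Nat.card {d : σ →₀ ℕ // d.degree < n + 1} := by
  rw [restrictTotalDegree, Module.finrank_eq_nat_card_basis (basisRestrictSupport K _)]
  simp only [Nat.lt_succ_iff]
  rfl

end Counting

section Jets

variable {σ ι : Type*}

/-- The Hermite data of a polynomial of degree at most `n`: the coefficients of degree less than
`nk k` of its Taylor expansion at each node `A k`. -/
noncomputable def hermiteJet {R : Type*} [CommSemiring R] (n : ℕ) (nk : ι → ℕ) (A : ι → σ → R) :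
    restrictTotalDegree σ R n →ₗ[R] ((Σ k, {d : σ →₀ ℕ // d.degree < nk k}) → R) :=
  LinearMap.pi fun x =>
    lcoeff R x.2.1 ∘ₗ (mvTaylor (A x.1)).toLinearMap ∘ₗ (restrictTotalDegree σ R n).subtype

theorem hermiteJet_injective {R : Type*} [CommRing R] {n : ℕ} {nk : ι → ℕ} {A : ι → σ → R}
    (h : ∀ p : MvPolynomial σ R, p.totalDegree ≤ n → (∀ k, nk k ≤ vanishingOrder (A k) p) → p = 0) :
    Function.Injective (hermiteJet n nk A) := by
  refine (injective_iff_map_eq_zero _).2 fun p hp => Subtype.ext ?_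
  refine h p ((mem_restrictTotalDegree σ n _).1 p.2) fun k => ?_
  exact natCast_le_vanishingOrder_iff.2 fun d hd => congrFun hp ⟨k, d, hd⟩

theorem hermiteJet_bijective {K : Type*} [Field K] [Finite σ] [Fintype ι] {n : ℕ}
    {nk : ι → ℕ} {A : ι → σ → K}
    (hcard : Nat.card {d : σ →₀ ℕ // d.degree < n + 1} =
      ∑ k, Nat.card {d : σ →₀ ℕ // d.degree < nk k})
    (h : ∀ p : MvPolynomial σ K, p.totalDegree ≤ n → (∀ k, nk k ≤ vanishingOrder (A k) p) → p = 0) :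
    Function.Bijective (hermiteJet n nk A) := by
  have hfin (N : ℕ) : Finite {d : σ →₀ ℕ // d.degree < N} := Finsupp.finite_of_degree_lt N
  have : Fintype (Σ k, {d : σ →₀ ℕ // d.degree < nk k}) := Fintype.ofFinite _
  have hfinrank : Module.finrank K (restrictTotalDegree σ K n) =
      Module.finrank K ((Σ k, {d : σ →₀ ℕ // d.degree < nk k}) → K) := by
    rw [finrank_restrictTotalDegree, hcard, Module.finrank_fintype_fun_eq_card,
      ← Nat.card_eq_fintype_card, Nat.card_sigma]
  have : FiniteDimensional K (restrictTotalDegree σ K n) :=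
    Module.Finite.of_injective _ (hermiteJet_injective h)
  exact ⟨hermiteJet_injective h,
    (LinearMap.injective_iff_surjective_of_finrank_eq_finrank hfinrank).1 (hermiteJet_injective h)⟩

end Jets

section BivariateHermite

open scoped Nat

theorem eval_Dij (a : Fin 2 → ℝ) (i j : ℕ) (p : MvPolynomial (Fin 2) ℝ) :
    eval a (Dij i j p) =
      i ! * j ! * coeff (Finsupp.single 0 i + Finsupp.single 1 j) (mvTaylor a p) := by
  have hcomm (k : Fin 2) : Function.Semiconj (mvTaylor a) (pderiv k) (pderiv k) :=
    fun q => (pderiv_mvTaylor a k q).symm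
  rw [← constantCoeff_mvTaylor, constantCoeff_eq]
  unfold Dij
  rw [(hcomm 0).iterate_right i, (hcomm 1).iterate_right j,
    coeff_iterate_pderiv, coeff_iterate_pderiv, mul_assoc]
  simp [Nat.one_ascFactorial]

theorem hermiteJet_eq_iff_eval_Dij {s n : ℕ} {nk : Fin s → ℕ} {A : Fin s → Fin 2 → ℝ}
    (c : Fin s → ℕ → ℕ → ℝ) (p : restrictTotalDegree (Fin 2) ℝ n) :
    (hermiteJet n nk A p = fun x => c x.1 (x.2.1 0) (x.2.1 1) / ((x.2.1 0)! * (x.2.1 1)!)) ↔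
      ∀ k i j, i + j + 1 ≤ nk k → eval (A k) (Dij i j p) = c k i j := by
  constructor
  · intro hp k i j hij
    have hcoeff := congrFun hp ⟨k, Finsupp.single 0 i + Finsupp.single 1 j, by simp; omega⟩
    simp only [Finsupp.add_apply, Finsupp.single_eq_same, ne_eq, zero_ne_one, one_ne_zero,
      not_false_eq_true, Finsupp.single_eq_of_ne, add_zero, zero_add] at hcoeff
    rw [eq_div_iff (by positivity), mul_comm] at hcoeff
    exact (eval_Dij _ i j p).trans hcoeff
  · intro h
    ext ⟨k, d, hd⟩
    have hsplit : Finsupp.single 0 (d 0) + Finsupp.single 1 (d 1) = d := by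
      ext i; fin_cases i <;> simp
    have hdeg : d 0 + d 1 + 1 ≤ nk k := by
      simpa [Finsupp.degree_eq_sum, Fin.sum_univ_two] using hd
    have heval := h k (d 0) (d 1) hdeg
    rw [eval_Dij, hsplit, mul_comm] at heval
    exact eq_div_of_mul_eq (by positivity) heval

theorem hermiteCorrect_of_forall_eq_zero {n s : ℕ} {nk : Fin s → ℕ} {A : Fin s → Fin 2 → ℝ}
    (hcard : (n + 2).choose 2 = ∑ k, (nk k + 1).choose 2)
    (h : ∀ p : MvPolynomial (Fin 2) ℝ,
      p.totalDegree ≤ n → (∀ k, nk k ≤ vanishingOrder (A k) p) → p = 0) :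
    HermiteCorrect n s nk A := by
  intro c
  have hbij : Function.Bijective (hermiteJet n nk A) :=
    hermiteJet_bijective (by simpa only [card_fin_two_degree_lt] using hcard) h
  obtain ⟨p, hp, huniq⟩ := hbij.existsUnique
    fun x => c x.1 (x.2.1 0) (x.2.1 1) / ((x.2.1 0)! * (x.2.1 1)!)
  refine ⟨p, ⟨(mem_restrictTotalDegree _ n _).1 p.2, (hermiteJet_eq_iff_eval_Dij c p).1 hp⟩, ?_⟩
  rintro q ⟨hq, hqc⟩
  have hqmem := (mem_restrictTotalDegree _ n q).2 hq
  exact congrArg Subtype.val (huniq ⟨q, hqmem⟩ ((hermiteJet_eq_iff_eval_Dij c ⟨q, hqmem⟩).2 hqc))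

end BivariateHermite

theorem choose_two_mul_add_two (m : ℕ) :
    (2 * m + 2).choose 2 = (m + 2).choose 2 + 3 * (m + 1).choose 2 := by
  induction m with
  | zero => rfl
  | succ m ih =>
    simp only [Nat.choose_succ_succ' _ 1, Nat.choose_one_right, Nat.mul_add] at ih ⊢
    omega

theorem stmt_18 (m : ℕ) (hm : 1 ≤ m) (A : Fin 4 → Fin 2 → ℝ)
    (hA : Function.Injective A)
    (hcol : ∀ i j k : Fin 4, i ≠ j → i ≠ k → j ≠ k →
      ∀ l : MvPolynomial (Fin 2) ℝ, l ≠ 0 → l.totalDegree = 1 →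
        ¬(eval (A i) l = 0 ∧ eval (A j) l = 0 ∧ eval (A k) l = 0)) :
    HermiteCorrect (2 * m) 4 ![m + 1, m, m, m] A := by
  have hsum (f : ℕ → ℕ) : ∑ k, f (![m + 1, m, m, m] k) = f (m + 1) + 3 * f m := by
    simp only [Fin.sum_univ_four, Matrix.cons_val]
    ring
  refine hermiteCorrect_of_forall_eq_zero ?_ fun p hp hord => ?_
  · rw [choose_two_mul_add_two, hsum fun r => (r + 1).choose 2]
  · refine eq_zero_of_two_mul_totalDegree_lt_sum_vanishingOrder hA
      (fun i j k hij hik hjk l hl =>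
        hcol i j k hij hik hjk l (by rintro rfl; simp at hl) hl) ?_
    calc ((2 * p.totalDegree : ℕ) : ℕ∞) < (∑ k, ![m + 1, m, m, m] k : ℕ) := by
          rw [hsum fun r => r, Nat.cast_lt]
          omega
      _ = ∑ k, (![m + 1, m, m, m] k : ℕ∞) := Nat.cast_sum _ _
      _ ≤ ∑ k, vanishingOrder (A k) p := Finset.sum_le_sum fun k _ => hord k
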